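/- Let X ~ N(0, I_{d×d}) be a standard Gaussian vector in ℝ^d and let F = f(X) for some f ∈ C²(ℝ^d) whose partial derivatives of order up to two have sub-exponential growth. Assume E[F] = 0 and E[F²] = σ² > 0, and let N ~ N(0, σ²). Then d_{KS}(F, N) ≤ (2/σ²) · √( Σ_{l,m=1}^d { E[ (⟨∇²_{l,·}F, ∇²_{m,·}F⟩)² ] }^{1/2} · { E[ (∇_l F · ∇_m F)² ] }^{1/2} ), where ∇_l F is the l-th partial derivative of f evaluated at X, ∇²_{l,·}F is the l-th row of the Hessian matrix of f evaluated at X, and ⟨·,·⟩ is the Euclidean inner product on ℝ^d. -/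

import Mathlib

open MeasureTheory ProbabilityTheory Real

/-- The Kolmogorov–Smirnov distance between two distributions on `ℝ`:
`sup_z |P(X ≤ z) − P(Y ≤ z)|`. -/
noncomputable def dKS (μ ν : Measure ℝ) : ℝ :=
  ⨆ z : ℝ, |(μ (Set.Iic z)).toReal - (ν (Set.Iic z)).toReal|

/-- The partial derivative `∂f/∂x_l` of `f : ℝ^d → ℝ` at `x`. -/
noncomputable def pderiv1 {d : ℕ} (f : (Fin d → ℝ) → ℝ) (l : Fin d)
    (x : Fin d → ℝ) : ℝ :=
  fderiv ℝ f x (Pi.single l 1)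

/-- The second partial derivative `∂²f/(∂x_l ∂x_m)` of `f : ℝ^d → ℝ` at `x`. -/
noncomputable def pderiv2 {d : ℕ} (f : (Fin d → ℝ) → ℝ) (l m : Fin d)
    (x : Fin d → ℝ) : ℝ :=
  fderiv ℝ (fun y => fderiv ℝ f y (Pi.single m 1)) x (Pi.single l 1)

set_option linter.all false
/-- Standard Gaussian on `ι → ℝ`. -/
noncomputable abbrev gam (ι : Type) [Fintype ι] : Measure (ι → ℝ) :=
  Measure.pi fun _ : ι => gaussianReal 0 1

instance gam_isGaussian (ι : Type) [Fintype ι] : IsGaussian (gam ι) := by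
  classical
  rw [← isGaussian_map_equiv_iff (EuclideanSpace.equiv ι ℝ).symm]
  have h := map_pi_eq_stdGaussian (ι := ι)
  change IsGaussian ((gam ι).map (WithLp.toLp 2))
  rw [h]
  infer_instance

lemma gam_mean (ι : Type) [Fintype ι] : (gam ι)[id] = 0 := by
  ext i
  simp only [id_eq, Pi.zero_apply]
  rw [eval_integral]
  · have := integral_comp_eval (μ := fun _ : ι => gaussianReal 0 1) (i := i)
      (f := fun x : ℝ => x) aestronglyMeasurable_id
    simpa using this
  · intro j
    have := (IsGaussian.integrable_dual (gam ι) (ContinuousLinearMap.proj j))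
    exact this

/-- Families of functions with uniform sub-exponential growth. -/
def SE {Θ E : Type*} [NormedAddCommGroup E] (F : Θ → E → ℝ) : Prop :=
  ∃ A B : ℝ, 0 ≤ A ∧ 0 ≤ B ∧ ∀ t x, |F t x| ≤ A * Real.exp (B * ‖x‖)

section SEsec
variable {Θ E E' : Type*} [NormedAddCommGroup E] [NormedAddCommGroup E']

lemma SE.const (c : ℝ) : SE (fun (_ : Θ) (_ : E) => c) :=
  ⟨|c|, 0, abs_nonneg _, le_rfl, fun t x => by simp⟩

lemma SE.norm_id : SE (fun (_ : Θ) (x : E) => ‖x‖) := by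
  refine ⟨1, 1, by simp, by simp, fun t x => ?_⟩
  have := Real.add_one_le_exp ‖x‖
  simp only [abs_norm, one_mul]
  linarith

lemma SE.mono {F G : Θ → E → ℝ} (hG : SE G) (h : ∀ t x, |F t x| ≤ |G t x|) : SE F := by
  obtain ⟨A, B, hA, hB, H⟩ := hG
  exact ⟨A, B, hA, hB, fun t x => (h t x).trans (H t x)⟩

lemma SE.add {F G : Θ → E → ℝ} (hF : SE F) (hG : SE G) : SE (fun t x => F t x + G t x) := by
  obtain ⟨A, B, hA, hB, H⟩ := hF
  obtain ⟨A', B', hA', hB', H'⟩ := hG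
  refine ⟨A + A', B + B', by positivity, by positivity, fun t x => ?_⟩
  refine (abs_add_le _ _).trans ?_
  rw [add_mul]
  refine add_le_add ((H t x).trans ?_) ((H' t x).trans ?_)
  · gcongr; linarith
  · gcongr; linarith

lemma SE.mul {F G : Θ → E → ℝ} (hF : SE F) (hG : SE G) : SE (fun t x => F t x * G t x) := by
  obtain ⟨A, B, hA, hB, H⟩ := hF
  obtain ⟨A', B', hA', hB', H'⟩ := hG
  refine ⟨A * A', B + B', by positivity, by positivity, fun t x => ?_⟩
  rw [abs_mul, add_mul, Real.exp_add]
  calc |F t x| * |G t x| ≤ (A * Real.exp (B * ‖x‖)) * (A' * Real.exp (B' * ‖x‖)) := by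
        gcongr
        · exact H t x
        · exact H' t x
    _ = _ := by ring

lemma SE.pow {F : Θ → E → ℝ} (hF : SE F) (n : ℕ) : SE (fun t x => F t x ^ n) := by
  induction n with
  | zero => simpa using SE.const (Θ := Θ) (E := E) 1
  | succ n ih => simpa [pow_succ] using ih.mul hF

lemma SE.sum {κ : Type*} (s : Finset κ) {F : κ → Θ → E → ℝ} (hF : ∀ k, SE (F k)) :
    SE (fun t x => ∑ k ∈ s, F k t x) := by
  classical
  induction s using Finset.induction_on with
  | empty => simpa using SE.const (Θ := Θ) (E := E) 0
  | insert a s ha ih => simpa [Finset.sum_insert ha] using (hF a).add ih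

lemma SE.comp {F : Θ → E → ℝ} (hF : SE F) {Θ' : Type*} (s : Θ' → Θ) (L : Θ' → E' → E) (C : ℝ)
    (hC : 0 ≤ C) (hL : ∀ t x, ‖L t x‖ ≤ C * ‖x‖) : SE (fun t x => F (s t) (L t x)) := by
  obtain ⟨A, B, hA, hB, H⟩ := hF
  refine ⟨A, B * C, hA, by positivity, fun t x => (H _ _).trans ?_⟩
  rw [mul_assoc]
  gcongr
  exact hL t x

lemma SE.at {F : Θ → E → ℝ} (hF : SE F) {Θ' : Type*} (s : Θ' → Θ) :
    SE (fun t x => F (s t) x) :=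
  hF.comp s (fun _ x => x) 1 zero_le_one (by simp)

end SEsec

lemma integrable_exp_norm {E : Type*} [NormedAddCommGroup E] [NormedSpace ℝ E]
    [SecondCountableTopology E] [CompleteSpace E] [MeasurableSpace E] [BorelSpace E]
    (μ : Measure E) [IsGaussian μ] (A B : ℝ) :
    Integrable (fun x => A * Real.exp (B * ‖x‖)) μ := by
  apply Integrable.const_mul
  obtain ⟨C, hC, hI⟩ := IsGaussian.exists_integrable_exp_sq μ
  refine (hI.const_mul (Real.exp (B ^ 2 / (4 * C)))).mono' (by fun_prop) (ae_of_all _ fun x => ?_)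
  rw [Real.norm_eq_abs, Real.abs_exp, ← Real.exp_add]
  apply Real.exp_le_exp.2
  have : B ^ 2 / (4 * C) + C * ‖x‖ ^ 2 - B * ‖x‖ = C * (‖x‖ - B / (2 * C)) ^ 2 := by
    field_simp; ring
  have h2 : 0 ≤ C * (‖x‖ - B / (2 * C)) ^ 2 := by positivity
  linarith

lemma SE.integrable {Θ E : Type*} [NormedAddCommGroup E] [NormedSpace ℝ E]
    [SecondCountableTopology E] [CompleteSpace E] [MeasurableSpace E] [BorelSpace E]
    (μ : Measure E) [IsGaussian μ] {F : Θ → E → ℝ} (hF : SE F) (t : Θ)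
    (hm : Continuous (F t)) : Integrable (F t) μ := by
  obtain ⟨A, B, hA, hB, H⟩ := hF
  exact (integrable_exp_norm μ A B).mono' hm.aestronglyMeasurable (ae_of_all _ fun x => H t x)

/-- Nice functions: `C¹`, with gradient of sub-exponential growth. -/
structure Nice {ι : Type} [Fintype ι] [DecidableEq ι] (g : (ι → ℝ) → ℝ) : Prop where
  cd : ContDiff ℝ 1 g
  se : SE (fun (_ : Unit) x => g x)
  sed : ∀ i, SE (fun (_ : Unit) x => fderiv ℝ g x (Pi.single i 1))

lemma hasDerivAt_pdf (x : ℝ) :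
    HasDerivAt (gaussianPDFReal 0 1) (-x * gaussianPDFReal 0 1 x) x := by
  rw [gaussianPDFReal_def]
  have h : HasDerivAt (fun x : ℝ => -(x - 0) ^ 2 / (2 * ((1 : NNReal) : ℝ))) (-x) x := by
    have := ((hasDerivAt_id x).sub_const 0).pow 2 |>.neg.div_const (2 * ((1 : NNReal) : ℝ))
    convert! this using 1
    simp
    ring
  convert! (h.exp).const_mul ((√(2 * π * ((1 : NNReal) : ℝ)))⁻¹) using 1
  ring

lemma integrable_pdf_mul {g : ℝ → ℝ} (hg : Integrable g (gaussianReal 0 1)) :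
    Integrable (fun x => gaussianPDFReal 0 1 x * g x) := by
  rw [gaussianReal_of_var_ne_zero 0 one_ne_zero, integrable_withDensity_iff_integrable_smul'
    (measurable_gaussianPDF _ _) (ae_of_all _ fun _ ↦ gaussianPDF_lt_top)] at hg
  simpa [toReal_gaussianPDF] using hg

lemma ibp1 (v v' : ℝ → ℝ) (hv : ∀ x, HasDerivAt v (v' x) x)
    (h0 : Integrable v (gaussianReal 0 1)) (h1 : Integrable (fun x => x * v x) (gaussianReal 0 1))
    (h2 : Integrable v' (gaussianReal 0 1)) :
    ∫ x, x * v x ∂(gaussianReal 0 1) = ∫ x, v' x ∂(gaussianReal 0 1) := by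
  rw [integral_gaussianReal_eq_integral_smul one_ne_zero,
    integral_gaussianReal_eq_integral_smul one_ne_zero]
  have i0 := integrable_pdf_mul h0
  have i1 := integrable_pdf_mul h1
  have i2 := integrable_pdf_mul h2
  have := integral_eq_zero_of_hasDerivAt_of_integrable
    (fun x => (hasDerivAt_pdf x).mul (hv x)) (f' := fun x => -x * gaussianPDFReal 0 1 x * v x
      + gaussianPDFReal 0 1 x * v' x) (by
      convert! i2.sub i1 using 1
      ext x; simp only [Pi.sub_apply]; ring) i0
  have h3 := integral_sub i2 i1
  have h4 : (fun x => -x * gaussianPDFReal 0 1 x * v x + gaussianPDFReal 0 1 x * v' x) =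
    fun x => gaussianPDFReal 0 1 x * v' x - gaussianPDFReal 0 1 x * (x * v x) := by
    ext x; ring
  rw [h4, h3] at this
  simp only [smul_eq_mul]
  linarith

lemma mp_update {ι : Type} [Fintype ι] [DecidableEq ι] (i : ι) :
    MeasurePreserving (fun p : (ι → ℝ) × ℝ => Function.update p.1 i p.2)
      ((gam ι).prod (gaussianReal 0 1)) (gam ι) := by
  have hm : Measurable (fun p : (ι → ℝ) × ℝ => Function.update p.1 i p.2) := by
    rw [measurable_pi_iff]
    intro j
    by_cases h : j = i
    · subst h; simpa using measurable_snd
    · simp only [Function.update_of_ne h]; fun_prop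
  refine ⟨hm, ?_⟩
  symm
  apply Measure.pi_eq
  intro s hs
  rw [Measure.map_apply hm (MeasurableSet.univ_pi hs)]
  have : (fun p : (ι → ℝ) × ℝ => Function.update p.1 i p.2) ⁻¹' (Set.univ.pi s)
      = (Set.univ.pi (Function.update s i Set.univ)) ×ˢ (s i) := by
    ext p
    simp only [Set.mem_preimage, Set.mem_univ_pi, Set.mem_prod]
    constructor
    · intro h
      refine ⟨fun j => ?_, by simpa using h i⟩
      by_cases hj : j = i
      · subst hj; simp
      · simpa [Function.update_of_ne hj] using h j
    · rintro ⟨h, h'⟩ j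
      by_cases hj : j = i
      · subst hj; simpa using h'
      · simpa [Function.update_of_ne hj] using h j
  rw [this, Measure.prod_prod, Measure.pi_pi,
    ← Finset.mul_prod_erase _ _ (Finset.mem_univ i), ← Finset.mul_prod_erase _ _ (Finset.mem_univ i)]
  simp only [Function.update_self, measure_univ, one_mul]
  rw [mul_comm]
  congr 1
  apply Finset.prod_congr rfl
  intro j hj
  rw [Function.update_of_ne (Finset.ne_of_mem_erase hj)]

lemma ibp {ι : Type} [Fintype ι] [DecidableEq ι] (u : (ι → ℝ) → ℝ) (hu : Nice u) (i : ι) :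
    ∫ x, x i * u x ∂(gam ι) = ∫ x, fderiv ℝ u x (Pi.single i 1) ∂(gam ι) := by
  have c1 : Continuous u := hu.cd.continuous
  have c2 : Continuous (fun x => fderiv ℝ u x (Pi.single i 1)) :=
    (hu.cd.continuous_fderiv one_ne_zero).clm_apply continuous_const
  have hco : SE (fun (_ : Unit) (x : ι → ℝ) => x i) :=
    SE.norm_id.mono (fun _ x => by simpa using norm_le_pi_norm x i)
  have I0 : Integrable u (gam ι) := hu.se.integrable (gam ι) () c1
  have I1 : Integrable (fun x => x i * u x) (gam ι) :=
    (hco.mul hu.se).integrable (gam ι) () (by fun_prop)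
  have I2 : Integrable (fun x => fderiv ℝ u x (Pi.single i 1)) (gam ι) :=
    (hu.sed i).integrable (gam ι) () c2
  have J0 := (mp_update i).integrable_comp_of_integrable I0
  have J1 := (mp_update i).integrable_comp_of_integrable I1
  have J2 := (mp_update i).integrable_comp_of_integrable I2
  simp only [Function.comp_def] at J0 J1 J2
  rw [← (mp_update i).map_eq, integral_map (mp_update i).measurable.aemeasurable
    (by rw [(mp_update i).map_eq]; exact I1.1), integral_map (mp_update i).measurable.aemeasurable
    (by rw [(mp_update i).map_eq]; exact I2.1), integral_prod _ J1, integral_prod _ J2]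
  apply integral_congr_ae
  filter_upwards [J0.prod_right_ae, J1.prod_right_ae, J2.prod_right_ae] with x h0 h1 h2
  simp only [Function.comp_def, Function.update_self] at h0 h1 h2 ⊢
  refine ibp1 _ _ (fun y => ?_) h0 h1 h2
  have := (hu.cd.differentiable one_ne_zero (Function.update x i y)).hasFDerivAt.comp_hasDerivAt y
    (hasDerivAt_update x i y)
  exact this
section cov
variable {ι : Type} [Fintype ι] [DecidableEq ι]

/-- Partial derivative. -/
noncomputable abbrev pd (g : (ι → ℝ) → ℝ) (i : ι) (x : ι → ℝ) : ℝ := fderiv ℝ g x (Pi.single i 1)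

lemma fderiv_eq_sum (g : (ι → ℝ) → ℝ) (x v : ι → ℝ) :
    fderiv ℝ g x v = ∑ i, v i * pd g i x := by
  conv_lhs => rw [pi_eq_sum_univ' v]
  simp [pd, map_sum]

lemma Nice.cpd {g : (ι → ℝ) → ℝ} (hg : Nice g) (i : ι) : Continuous (pd g i) :=
  (hg.cd.continuous_fderiv one_ne_zero).clm_apply continuous_const

lemma SE.translate {E : Type*} [NormedAddCommGroup E] [NormedSpace ℝ E] {F : E → ℝ}
    (hF : SE (fun (_ : Unit) x => F x)) (v : E) (c : ℝ) :
    SE (fun (_ : Unit) x => F (v + c • x)) := by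
  obtain ⟨A, B, hA, hB, H⟩ := hF
  refine ⟨A * Real.exp (B * ‖v‖), B * |c|, by positivity, by positivity, fun t x => ?_⟩
  refine (H () _).trans ?_
  rw [mul_assoc, ← Real.exp_add]
  gcongr
  have h1 := norm_add_le v (c • x)
  rw [norm_smul, Real.norm_eq_abs] at h1
  nlinarith

lemma fderiv_translate {g : (ι → ℝ) → ℝ} (hg : Nice g) (v : ι → ℝ) (c : ℝ) (i : ι) (x : ι → ℝ) :
    pd (fun b => g (v + c • b)) i x = c * pd g i (v + c • x) := by
  have h1 : HasFDerivAt (fun b : ι → ℝ => v + c • b) (c • ContinuousLinearMap.id ℝ (ι → ℝ)) x :=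
    ((hasFDerivAt_id x).const_smul c).const_add v
  have h2 := (hg.cd.differentiable one_ne_zero (v + c • x)).hasFDerivAt.comp x h1
  have h3 : fderiv ℝ (fun b => g (v + c • b)) x = _ := h2.fderiv
  simp [pd, h3]

lemma Nice.translate {g : (ι → ℝ) → ℝ} (hg : Nice g) (v : ι → ℝ) (c : ℝ) :
    Nice (fun b => g (v + c • b)) where
  cd := hg.cd.comp (by fun_prop)
  se := hg.se.translate v c
  sed i := by
    have := fderiv_translate hg v c i
    simp only [pd] at this
    simp only [this]
    exact (SE.const c).mul ((hg.sed i).translate v c)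

/-- The interpolation `sin θ x + cos θ y`. -/
noncomputable def mix {E : Type*} [NormedAddCommGroup E] [NormedSpace ℝ E] (θ : ℝ) (p : E × E) : E :=
  Real.sin θ • p.1 + Real.cos θ • p.2

lemma norm_lin_le {E : Type*} [NormedAddCommGroup E] [NormedSpace ℝ E] (a b : ℝ) (ha : |a| ≤ 1)
    (hb : |b| ≤ 1) (p : E × E) : ‖a • p.1 + b • p.2‖ ≤ 2 * ‖p‖ := by
  have h1 := norm_add_le (a • p.1) (b • p.2)
  rw [norm_smul, norm_smul, Real.norm_eq_abs, Real.norm_eq_abs] at h1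
  have h2 := norm_fst_le p
  have h3 := norm_snd_le p
  have := mul_le_mul ha h2 (norm_nonneg _) zero_le_one
  have := mul_le_mul hb h3 (norm_nonneg _) zero_le_one
  linarith

lemma norm_mix_le {E : Type*} [NormedAddCommGroup E] [NormedSpace ℝ E] (θ : ℝ) (p : E × E) :
    ‖mix θ p‖ ≤ 2 * ‖p‖ :=
  norm_lin_le _ _ (Real.abs_sin_le_one θ) (Real.abs_cos_le_one θ) p

lemma continuous_mix {E : Type*} [NormedAddCommGroup E] [NormedSpace ℝ E] (θ : ℝ) :
    Continuous (mix (E := E) θ) := by unfold mix; fun_prop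

lemma mp_rot (θ : ℝ) : MeasurePreserving
    (fun p : (ι → ℝ) × (ι → ℝ) => (mix θ p, -Real.cos θ • p.1 + Real.sin θ • p.2))
    ((gam ι).prod (gam ι)) ((gam ι).prod (gam ι)) := by
  refine ⟨by unfold mix; fun_prop, ?_⟩
  have := IsGaussian.map_rotation_eq_self (gam_mean ι) (π / 2 - θ)
  convert! this using 2
  ext p : 1
  simp [ContinuousLinearMap.rotation_apply, mix, Real.cos_pi_div_two_sub, Real.sin_pi_div_two_sub]

lemma mp_mix (θ : ℝ) : MeasurePreserving (mix θ) ((gam ι).prod (gam ι)) (gam ι) :=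
  measurePreserving_fst.comp (mp_rot θ)

lemma rot_inv (θ : ℝ) (p : (ι → ℝ) × (ι → ℝ)) :
    Real.sin θ • mix θ p + (-Real.cos θ) • (-Real.cos θ • p.1 + Real.sin θ • p.2) = p.1 := by
  ext i
  simp [mix]
  linear_combination (p.1 i) * Real.sin_sq_add_cos_sq θ

lemma cov_step {g h : (ι → ℝ) → ℝ} (hg : Nice g) (hh : Nice h) (θ : ℝ) :
    ∫ p, g p.1 * ∑ i, (Real.cos θ * p.1 i - Real.sin θ * p.2 i) * pd h i (mix θ p)
        ∂((gam ι).prod (gam ι))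
      = Real.cos θ * ∫ p, ∑ i, pd g i p.1 * pd h i (mix θ p) ∂((gam ι).prod (gam ι)) := by
  set P := (gam ι).prod (gam ι) with hP
  set s := Real.sin θ
  set c := Real.cos θ
  have hs1 : |s| ≤ 1 := Real.abs_sin_le_one θ
  have hc1 : |-c| ≤ 1 := by rw [abs_neg]; exact Real.abs_cos_le_one θ
  have cg := hg.cd.continuous
  have lin : ∀ {F : (ι → ℝ) → ℝ}, SE (fun (_ : Unit) x => F x) →
      SE (fun (_ : Unit) (p : (ι → ℝ) × (ι → ℝ)) => F (s • p.1 + (-c) • p.2)) := fun hF =>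
    hF.comp id (fun _ p => s • p.1 + (-c) • p.2) 2 (by norm_num)
      (fun _ p => norm_lin_le _ _ hs1 hc1 p)
  have fst : ∀ {F : (ι → ℝ) → ℝ}, SE (fun (_ : Unit) x => F x) →
      SE (fun (_ : Unit) (p : (ι → ℝ) × (ι → ℝ)) => F p.1) := fun hF =>
    hF.comp id (fun _ (p : (ι → ℝ) × (ι → ℝ)) => p.1) 1 (by norm_num) (fun _ p => by simpa using norm_fst_le p)
  have I1 : ∀ i, Integrable (fun p : (ι → ℝ) × (ι → ℝ) =>
      -(pd h i p.1) * (p.2 i * g (s • p.1 + (-c) • p.2))) P := by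
    intro i
    have hco : SE (fun (_ : Unit) (x : (ι → ℝ) × (ι → ℝ)) => x.2 i) :=
      SE.norm_id.mono (fun _ x => by simpa using (norm_le_pi_norm x.2 i).trans (norm_snd_le x))
    have := ((SE.const (-1)).mul (fst (hh.sed i))).mul (hco.mul (lin hg.se))
    have c1 := hh.cpd i
    simp only [neg_mul, one_mul] at this
    simp only [neg_mul]
    exact this.integrable P () (by unfold pd at c1; fun_prop)
  have I2 : ∀ i, Integrable (fun p : (ι → ℝ) × (ι → ℝ) =>
      -(pd h i p.1) * ((-c) * pd g i (s • p.1 + (-c) • p.2))) P := by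
    intro i
    have := ((SE.const (-1)).mul (fst (hh.sed i))).mul ((SE.const (-c)).mul (lin (hg.sed i)))
    have c1 := hh.cpd i
    have c2 := hg.cpd i
    simp only [neg_mul, one_mul] at this
    simp only [neg_mul]
    exact this.integrable P () (by unfold pd at c1 c2; fun_prop)
  have key : ∀ i, ∫ p, -(pd h i p.1) * (p.2 i * g (s • p.1 + (-c) • p.2)) ∂P
      = ∫ p, -(pd h i p.1) * ((-c) * pd g i (s • p.1 + (-c) • p.2)) ∂P := by
    intro i
    rw [integral_prod _ (I1 i), integral_prod _ (I2 i)]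
    congr 1
    ext a
    simp only [integral_const_mul]
    congr 1
    rw [ibp _ (hg.translate (s • a) (-c)) i, ← integral_const_mul]
    congr 1
    ext b
    exact fderiv_translate hg (s • a) (-c) i b
  have T1 := integral_map (μ := P) (mp_rot θ).measurable.aemeasurable
    (f := fun p => ∑ i, -(pd h i p.1) * (p.2 i * g (s • p.1 + (-c) • p.2)))
    (by rw [(mp_rot θ).map_eq]; exact (integrable_finsetSum _ fun i _ => I1 i).1)
  have T2 := integral_map (μ := P) (mp_rot θ).measurable.aemeasurable
    (f := fun p => ∑ i, -(pd h i p.1) * ((-c) * pd g i (s • p.1 + (-c) • p.2)))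
    (by rw [(mp_rot θ).map_eq]; exact (integrable_finsetSum _ fun i _ => I2 i).1)
  rw [(mp_rot θ).map_eq] at T1 T2
  simp only [rot_inv, s, c] at T1 T2
  simp only [s, c] at I1 I2 key
  have e1 : ∀ p : (ι → ℝ) × (ι → ℝ),
      g p.1 * ∑ i, (Real.cos θ * p.1 i - Real.sin θ * p.2 i) * pd h i (mix θ p)
      = ∑ i, -(pd h i (mix θ p)) * ((-Real.cos θ • p.1 + Real.sin θ • p.2) i * g p.1) := by
    intro p
    rw [Finset.mul_sum]
    refine Finset.sum_congr rfl fun i _ => ?_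
    simp
    ring
  have e2 : ∀ p : (ι → ℝ) × (ι → ℝ),
      Real.cos θ * ∑ i, pd g i p.1 * pd h i (mix θ p)
      = ∑ i, -(pd h i (mix θ p)) * (-Real.cos θ * pd g i p.1) := by
    intro p
    rw [Finset.mul_sum]
    refine Finset.sum_congr rfl fun i _ => ?_
    ring
  rw [← integral_const_mul]
  simp only [s, c, e1, e2]
  rw [← T1, ← T2, integral_finsetSum _ fun i _ => I1 i, integral_finsetSum _ fun i _ => I2 i]
  exact Finset.sum_congr rfl fun i _ => key i

lemma SE.mix {Θ E : Type*} [NormedAddCommGroup E] [NormedSpace ℝ E] {F : E → ℝ}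
    (hF : SE (fun (_ : Unit) x => F x)) (s : Θ → ℝ) :
    SE (fun (t : Θ) (p : E × E) => F (mix (s t) p)) :=
  hF.comp (fun _ => ()) (fun t p => _root_.mix (s t) p) 2 (by norm_num) (fun _ p => norm_mix_le _ p)

lemma SE.fst {Θ E : Type*} [NormedAddCommGroup E] {F : E → ℝ}
    (hF : SE (fun (_ : Unit) x => F x)) :
    SE (fun (_ : Θ) (p : E × E) => F p.1) :=
  hF.comp (fun _ => ()) (fun _ (p : E × E) => p.1) 1 (by norm_num) (fun _ p => by simpa using norm_fst_le p)

/-- Integrand of the covariance identity. -/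
noncomputable def covI (g h : (ι → ℝ) → ℝ) (θ : ℝ) : ℝ :=
  ∫ p, ∑ i, pd g i p.1 * pd h i (mix θ p) ∂((gam ι).prod (gam ι))

lemma covI_se {g h : (ι → ℝ) → ℝ} (hg : Nice g) (hh : Nice h) :
    SE (fun (θ : ℝ) (p : (ι → ℝ) × (ι → ℝ)) => ∑ i, pd g i p.1 * pd h i (mix θ p)) :=
  SE.sum _ fun i => (hg.sed i).fst.mul ((hh.sed i).mix (fun θ => θ))

lemma continuous_mix' : Continuous (fun q : ℝ × ((ι → ℝ) × (ι → ℝ)) => mix q.1 q.2) := by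
  unfold mix; fun_prop

lemma covI_cont0 {g h : (ι → ℝ) → ℝ} (hg : Nice g) (hh : Nice h) :
    Continuous (fun q : ℝ × ((ι → ℝ) × (ι → ℝ)) => ∑ i, pd g i q.2.1 * pd h i (mix q.1 q.2)) :=
  continuous_finsetSum _ fun i _ => ((hg.cpd i).comp (by fun_prop)).mul
    ((hh.cpd i).comp continuous_mix')

lemma continuous_covI {g h : (ι → ℝ) → ℝ} (hg : Nice g) (hh : Nice h) :
    Continuous (covI g h) := by
  obtain ⟨A, B, hA, hB, H⟩ := covI_se hg hh
  have C := covI_cont0 hg hh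
  refine continuous_of_dominated (bound := fun p => A * Real.exp (B * ‖p‖)) (fun θ => ?_)
    (fun θ => ae_of_all _ fun p => H θ p) (integrable_exp_norm _ A B) (ae_of_all _ fun p => ?_)
  · exact (C.comp (f := fun p => (θ, p)) (by fun_prop)).aestronglyMeasurable
  · exact C.comp (f := fun θ => (θ, p)) (by fun_prop)

lemma cov_id {g h : (ι → ℝ) → ℝ} (hg : Nice g) (hh : Nice h) :
    ∫ x, g x * h x ∂(gam ι) - (∫ x, g x ∂(gam ι)) * ∫ x, h x ∂(gam ι)
      = ∫ θ in (0 : ℝ)..(π / 2), Real.cos θ * covI g h θ := by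
  set P := (gam ι).prod (gam ι) with hP
  have cg := hg.cd.continuous
  have ch := hh.cd.continuous
  have hco : ∀ i, SE (fun (θ : ℝ) (p : (ι → ℝ) × (ι → ℝ)) =>
      Real.cos θ * p.1 i - Real.sin θ * p.2 i) := by
    intro i
    refine ((SE.const 2).mul SE.norm_id).mono (fun θ p => ?_)
    have h1 := norm_lin_le (Real.cos θ) (-Real.sin θ) (Real.abs_cos_le_one θ)
      (by rw [abs_neg]; exact Real.abs_sin_le_one θ) p
    have h2 := norm_le_pi_norm (Real.cos θ • p.1 + -Real.sin θ • p.2) i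
    rw [abs_of_nonneg (by positivity : 0 ≤ 2 * ‖p‖)]
    refine le_trans (le_of_eq ?_) (h2.trans h1)
    simp [sub_eq_add_neg]
  have hse : SE (fun (θ : ℝ) (p : (ι → ℝ) × (ι → ℝ)) =>
      g p.1 * ∑ i, (Real.cos θ * p.1 i - Real.sin θ * p.2 i) * pd h i (mix θ p)) :=
    hg.se.fst.mul (SE.sum _ fun i => (hco i).mul ((hh.sed i).mix (fun θ => θ)))
  have hse0 : SE (fun (θ : ℝ) (p : (ι → ℝ) × (ι → ℝ)) => g p.1 * h (mix θ p)) :=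
    hg.se.fst.mul (hh.se.mix (fun θ => θ))
  have c0 : ∀ θ, Continuous (fun p : (ι → ℝ) × (ι → ℝ) => g p.1 * h (mix θ p)) := fun θ =>
    (cg.comp continuous_fst).mul (ch.comp (continuous_mix θ))
  have c1 : ∀ θ, Continuous (fun p : (ι → ℝ) × (ι → ℝ) =>
      g p.1 * ∑ i, (Real.cos θ * p.1 i - Real.sin θ * p.2 i) * pd h i (mix θ p)) := fun θ =>
    (cg.comp continuous_fst).mul (continuous_finsetSum _ fun i _ =>
      Continuous.mul (by fun_prop) ((hh.cpd i).comp (continuous_mix θ)))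
  have hd : ∀ θ, HasDerivAt (fun θ => ∫ p, g p.1 * h (mix θ p) ∂P)
      (Real.cos θ * covI g h θ) θ := by
    intro θ
    obtain ⟨A, B, hA, hB, H⟩ := hse
    have := (hasDerivAt_integral_of_dominated_loc_of_deriv_le (μ := P) (x₀ := θ) (s := Set.univ)
      (F := fun θ p => g p.1 * h (mix θ p)) (bound := fun p => A * Real.exp (B * ‖p‖))
      (F' := fun θ p =>
        g p.1 * ∑ i, (Real.cos θ * p.1 i - Real.sin θ * p.2 i) * pd h i (mix θ p))
      Filter.univ_mem (Filter.Eventually.of_forall fun t => (c0 t).aestronglyMeasurable)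
      (hse0.integrable P θ (c0 θ)) (c1 θ).aestronglyMeasurable
      (ae_of_all _ fun p t _ => H t p) (integrable_exp_norm _ A B)
      (ae_of_all _ fun p t _ => ?_)).2
    · rwa [cov_step hg hh θ] at this
    · apply HasDerivAt.const_mul
      have d1 : HasDerivAt (fun t => mix t p) (Real.cos t • p.1 + (-Real.sin t) • p.2) t :=
        ((Real.hasDerivAt_sin t).smul_const p.1).add ((Real.hasDerivAt_cos t).smul_const p.2)
      have d2 := (hh.cd.differentiable one_ne_zero (mix t p)).hasFDerivAt.comp_hasDerivAt t d1
      rw [fderiv_eq_sum] at d2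
      convert! d2 using 1
      refine Finset.sum_congr rfl fun i _ => ?_
      simp [sub_eq_add_neg]
  rw [intervalIntegral.integral_eq_sub_of_hasDerivAt (fun θ _ => hd θ)
    ((Real.continuous_cos.mul (continuous_covI hg hh)).intervalIntegrable _ _)]
  simp only [mix, Real.sin_pi_div_two, Real.cos_pi_div_two, Real.sin_zero, Real.cos_zero, one_smul,
    zero_smul, add_zero, zero_add]
  rw [integral_prod_mul]
  congr 1
  have := integral_fun_fst (μ := gam ι) (ν := gam ι) (f := fun x => g x * h x)
  rw [hP, this]
  simp
end cov
lemma cs_ineq {Ω : Type*} [MeasurableSpace Ω] (μ : Measure Ω) {a b : Ω → ℝ}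
    (ha : MemLp a 2 μ) (hb : MemLp b 2 μ) :
    ∫ x, a x * b x ∂μ ≤ (∫ x, a x ^ 2 ∂μ) ^ ((1 : ℝ) / 2) * (∫ x, b x ^ 2 ∂μ) ^ ((1 : ℝ) / 2) := by
  have h22 : (2 : ℝ).HolderConjugate 2 := Real.HolderConjugate.two_two
  have e : ENNReal.ofReal (2 : ℝ) = 2 := by simp
  have h := integral_mul_norm_le_Lp_mul_Lq (μ := μ) (f := a) (g := b) h22
    (by rw [e]; exact ha) (by rw [e]; exact hb)
  have : ∫ x, a x * b x ∂μ ≤ ∫ x, ‖a x‖ * ‖b x‖ ∂μ := by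
    refine integral_mono (ha.integrable_mul hb) (ha.norm.integrable_mul hb.norm) fun x => ?_
    simp only [Real.norm_eq_abs]
    rw [← abs_mul]
    exact le_abs_self _
  refine this.trans (h.trans (le_of_eq ?_))
  simp

lemma l1_le_l2 {Ω : Type*} [MeasurableSpace Ω] (μ : Measure Ω) [IsProbabilityMeasure μ] {a : Ω → ℝ}
    (ha : MemLp a 2 μ) (D : ℝ) (hD : 0 ≤ D) (h : ∫ x, a x ^ 2 ∂μ ≤ D ^ 2) :
    ∫ x, |a x| ∂μ ≤ D := by
  have h1 := cs_ineq μ (b := fun _ => (1 : ℝ)) ha.norm (memLp_const 1)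
  simp only [Real.norm_eq_abs, mul_one, sq_abs, one_pow, integral_const, smul_eq_mul, mul_one,
    probReal_univ, Real.one_rpow] at h1
  refine h1.trans ?_
  rw [← Real.sqrt_eq_rpow]
  exact Real.sqrt_le_iff.2 ⟨hD, h⟩

section poin
variable {ι : Type} [Fintype ι] [DecidableEq ι]

lemma poincare {k : (ι → ℝ) → ℝ} (hk : Nice k) :
    ∫ x, (k x - ∫ y, k y ∂(gam ι)) ^ 2 ∂(gam ι) ≤ ∫ x, ∑ i, pd k i x ^ 2 ∂(gam ι) := by
  have ck := hk.cd.continuous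
  have Ik : Integrable k (gam ι) := hk.se.integrable (gam ι) () ck
  have Ik2 : Integrable (fun x => k x * k x) (gam ι) :=
    (hk.se.mul hk.se).integrable (gam ι) () (by fun_prop)
  set m := ∫ y, k y ∂(gam ι) with hm
  have Idi : ∀ i, Integrable (fun x => pd k i x ^ 2) (gam ι) := fun i =>
    ((hk.sed i).pow 2).integrable (gam ι) () ((hk.cpd i).pow 2)
  have Id : Integrable (fun x => ∑ i, pd k i x ^ 2) (gam ι) :=
    integrable_finsetSum _ fun i _ => Idi i
  have h1 : ∫ x, (k x - m) ^ 2 ∂(gam ι) = ∫ x, k x * k x ∂(gam ι) - m * m := by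
    have : ∀ x, (k x - m) ^ 2 = k x * k x - 2 * m * k x + m * m := fun x => by ring
    simp only [this]
    rw [integral_add (by fun_prop) (by fun_prop), integral_sub Ik2 (Ik.const_mul _),
      integral_const_mul, ← hm]
    simp
    ring
  rw [h1, hm, cov_id hk hk]
  have h2 : ∀ θ, covI k k θ ≤ ∫ x, ∑ i, pd k i x ^ 2 ∂(gam ι) := by
    intro θ
    have M1 := (measurePreserving_fst (μ := gam ι) (ν := gam ι))
    have M2 := mp_mix (ι := ι) θ
    have A1 := M1.integrable_comp_of_integrable Id
    have A2 := M2.integrable_comp_of_integrable Id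
    have B1 := integral_map M1.measurable.aemeasurable (f := fun x => ∑ i, pd k i x ^ 2)
      (by rw [M1.map_eq]; exact Id.1)
    have B2 := integral_map M2.measurable.aemeasurable (f := fun x => ∑ i, pd k i x ^ 2)
      (by rw [M2.map_eq]; exact Id.1)
    rw [M1.map_eq] at B1
    rw [M2.map_eq] at B2
    simp only [Function.comp_def] at A1 A2
    have : covI k k θ ≤ ∫ p, (1 / 2 * (∑ i, pd k i p.1 ^ 2) + 1 / 2 * ∑ i, pd k i (mix θ p) ^ 2)
        ∂((gam ι).prod (gam ι)) := by
      refine integral_mono ((covI_se hk hk).integrable _ θ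
        ((covI_cont0 hk hk).comp (f := fun p => (θ, p)) (by fun_prop)))
        ((A1.const_mul _).add (A2.const_mul _)) fun p => ?_
      simp only
      rw [Finset.mul_sum, Finset.mul_sum, ← Finset.sum_add_distrib]
      refine Finset.sum_le_sum fun i _ => ?_
      nlinarith [sq_nonneg (pd k i p.1 - pd k i (mix θ p))]
    rw [integral_add (A1.const_mul _) (A2.const_mul _), integral_const_mul, integral_const_mul,
      ← B1, ← B2] at this
    linarith
  calc ∫ θ in (0 : ℝ)..(π / 2), Real.cos θ * covI k k θ
      ≤ ∫ θ in (0 : ℝ)..(π / 2), Real.cos θ * ∫ x, ∑ i, pd k i x ^ 2 ∂(gam ι) := by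
        refine intervalIntegral.integral_mono_on (by positivity)
          ((Real.continuous_cos.mul (continuous_covI hk hk)).intervalIntegrable _ _)
          ((Real.continuous_cos.mul continuous_const).intervalIntegrable _ _) fun θ hθ => ?_
        have : 0 ≤ Real.cos θ := Real.cos_nonneg_of_mem_Icc ⟨by linarith [hθ.1, Real.pi_pos], hθ.2⟩
        exact mul_le_mul_of_nonneg_left (h2 θ) this
    _ = _ := by
        rw [intervalIntegral.integral_mul_const, integral_cos]
        simp

lemma stein_abs {f φ w : (ι → ℝ) → ℝ} (hf : Nice f) (hφ : Nice φ) (hw : Continuous w)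
    (hw1 : ∀ x, |w x| ≤ 1) (hpd : ∀ i x, pd φ i x = w x * pd f i x) (σ2 D : ℝ) (hD : 0 ≤ D)
    (hmean : ∫ x, f x ∂(gam ι) = 0) (hvar : ∫ x, f x ^ 2 ∂(gam ι) = σ2)
    (hK : ∀ θ, ∫ p, ((∑ i, pd f i p.1 * pd f i (mix θ p)) - covI f f θ) ^ 2 
        ∂((gam ι).prod (gam ι)) ≤ D ^ 2) :
    |σ2 * ∫ x, w x ∂(gam ι) - ∫ x, φ x * f x ∂(gam ι)| ≤ D := by
  have h1 := cov_id hφ hf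
  have h2 := cov_id hf hf
  rw [hmean, mul_zero, sub_zero] at h1
  rw [hmean, mul_zero, sub_zero] at h2
  simp only [← pow_two, hvar] at h2
  rw [h1, h2, ← intervalIntegral.integral_mul_const, ← intervalIntegral.integral_sub]
  rotate_left
  · exact ((Real.continuous_cos.mul (continuous_covI hf hf)).mul
      continuous_const).intervalIntegrable _ _
  · exact (Real.continuous_cos.mul (continuous_covI hφ hf)).intervalIntegrable _ _
  have Iw : Integrable w (gam ι) := Integrable.of_bound hw.aestronglyMeasurable 1
    (ae_of_all _ fun x => hw1 x)
  have M1 := (measurePreserving_fst (μ := gam ι) (ν := gam ι))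
  have Iw' := M1.integrable_comp_of_integrable Iw
  simp only [Function.comp_def] at Iw'
  have Bw := integral_map M1.measurable.aemeasurable (f := w) (by rw [M1.map_eq]; exact Iw.1)
  rw [M1.map_eq] at Bw
  have bd : ∀ θ, |covI f f θ * ∫ x, w x ∂(gam ι) - covI φ f θ| ≤ D := by
    intro θ
    have cK : Continuous (fun p : (ι → ℝ) × (ι → ℝ) => ∑ i, pd f i p.1 * pd f i (mix θ p)) :=
      (covI_cont0 hf hf).comp (f := fun p => (θ, p)) (by fun_prop)
    have IK := (covI_se hf hf).integrable ((gam ι).prod (gam ι)) θ cK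
    have IK2 := (((covI_se hf hf).add (SE.const (-covI f f θ))).pow 2).integrable
      ((gam ι).prod (gam ι)) θ (by fun_prop)
    simp only [← sub_eq_add_neg] at IK2
    have mK : MemLp (fun p : (ι → ℝ) × (ι → ℝ) =>
        (∑ i, pd f i p.1 * pd f i (mix θ p)) - covI f f θ) 2 ((gam ι).prod (gam ι)) :=
      (memLp_two_iff_integrable_sq (cK.sub continuous_const).aestronglyMeasurable).2 IK2
    have L1 := l1_le_l2 _ mK D hD (hK θ)
    have e1 : covI φ f θ = ∫ p, w p.1 * (∑ i, pd f i p.1 * pd f i (mix θ p))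
        ∂((gam ι).prod (gam ι)) := by
      unfold covI
      congr 1
      ext p
      rw [Finset.mul_sum]
      refine Finset.sum_congr rfl fun i _ => ?_
      rw [hpd, mul_assoc]
    have IwK : Integrable (fun p : (ι → ℝ) × (ι → ℝ) =>
        w p.1 * (∑ i, pd f i p.1 * pd f i (mix θ p))) ((gam ι).prod (gam ι)) :=
      IK.bdd_mul Iw'.1 (ae_of_all _ fun p => hw1 p.1)
    rw [e1, Bw, ← integral_const_mul, ← integral_sub (Iw'.const_mul _) IwK]
    refine (abs_integral_le_integral_abs).trans (le_trans ?_ L1)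
    refine integral_mono (((Iw'.const_mul _).sub IwK).abs) 
      ((mK.integrable (by norm_num)).abs) fun p => ?_
    simp only
    have : covI f f θ * w p.1 - w p.1 * ∑ i, pd f i p.1 * pd f i (mix θ p)
      = - (w p.1 * ((∑ i, pd f i p.1 * pd f i (mix θ p)) - covI f f θ)) := by ring
    rw [this, abs_neg, abs_mul]
    exact mul_le_of_le_one_left (abs_nonneg _) (hw1 _)
  refine (intervalIntegral.abs_integral_le_integral_abs (by positivity)).trans ?_
  calc ∫ θ in (0 : ℝ)..(π / 2), |Real.cos θ * covI f f θ * ∫ x, w x ∂(gam ι)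
          - Real.cos θ * covI φ f θ|
      ≤ ∫ θ in (0 : ℝ)..(π / 2), Real.cos θ * D := by
        refine intervalIntegral.integral_mono_on (by positivity)
          (((((Real.continuous_cos.mul (continuous_covI hf hf)).mul
            continuous_const).sub (Real.continuous_cos.mul
              (continuous_covI hφ hf))).abs).intervalIntegrable _ _)
          ((Real.continuous_cos.mul continuous_const).intervalIntegrable _ _) fun θ hθ => ?_
        have : 0 ≤ Real.cos θ := Real.cos_nonneg_of_mem_Icc ⟨by linarith [hθ.1, Real.pi_pos], hθ.2⟩
        rw [mul_assoc, ← mul_sub, abs_mul, abs_of_nonneg this]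
        exact mul_le_mul_of_nonneg_left (bd θ) this
    _ = D := by
        rw [intervalIntegral.integral_mul_const, integral_cos]
        simp
end poin
section varb
variable {ι : Type} [Fintype ι] [DecidableEq ι]

/-- The right-hand side functional. -/
noncomputable def SS (f : (ι → ℝ) → ℝ) : ℝ :=
  ∑ l, ∑ m, ((∫ x, (∑ s, pd (pd f s) l x * pd (pd f s) m x) ^ 2 ∂(gam ι)) ^ ((1:ℝ)/2))
    * ((∫ x, (pd f l x * pd f m x) ^ 2 ∂(gam ι)) ^ ((1:ℝ)/2))

lemma pd_symm {f : (ι → ℝ) → ℝ} (hf : ContDiff ℝ 2 f) (l m : ι) (x : ι → ℝ) :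
    pd (pd f l) m x = pd (pd f m) l x := by
  have hd : DifferentiableAt ℝ (fderiv ℝ f) x :=
    ((hf.fderiv_right (m := 1) (by norm_num)).differentiable one_ne_zero) x
  have key : ∀ a b : ι, pd (pd f a) b x
      = fderiv ℝ (fderiv ℝ f) x (Pi.single b 1) (Pi.single a 1) := by
    intro a b
    change fderiv ℝ (fun y => fderiv ℝ f y (Pi.single a 1)) x (Pi.single b 1) = _
    generalize (Pi.single a (1 : ℝ) : ι → ℝ) = v
    have h := hd.hasFDerivAt.clm_apply (hasFDerivAt_const v x)
    rw [h.fderiv]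
    simp
  rw [key, key]
  have hs : IsSymmSndFDerivAt ℝ f x := hf.contDiffAt.isSymmSndFDerivAt (by simp)
  exact hs _ _

lemma quad_bound {Ω : Type*} [MeasurableSpace Ω] (Q : Measure Ω) {f : (ι → ℝ) → ℝ}
    (hf : ContDiff ℝ 2 f) (hn : ∀ l, Nice (pd f l)) {U V : Ω → ι → ℝ}
    (hU : MeasurePreserving U Q (gam ι)) (hV : MeasurePreserving V Q (gam ι)) :
    Integrable (fun z => ∑ m, (∑ l, pd (pd f l) m (U z) * pd f l (V z)) ^ 2) Q ∧
    ∫ z, ∑ m, (∑ l, pd (pd f l) m (U z) * pd f l (V z)) ^ 2 ∂Q ≤ SS f := by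
  have e : ∀ z, ∑ m, (∑ l, pd (pd f l) m (U z) * pd f l (V z)) ^ 2
      = ∑ l, ∑ k, (∑ s, pd (pd f s) l (U z) * pd (pd f s) k (U z)) 
          * (pd f l (V z) * pd f k (V z)) := by
    intro z
    simp only [pow_two, Finset.sum_mul_sum]
    rw [Finset.sum_comm]
    refine Finset.sum_congr rfl fun l _ => ?_
    rw [Finset.sum_comm]
    refine Finset.sum_congr rfl fun k _ => ?_
    rw [Finset.sum_mul]
    refine Finset.sum_congr rfl fun s _ => ?_
    rw [pd_symm hf l s, pd_symm hf k s]
    ring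
  simp only [e]
  have L1 : ∀ l k, MemLp (fun x => ∑ s, pd (pd f s) l x * pd (pd f s) k x) 2 (gam ι) := by
    intro l k
    have c : Continuous (fun x => ∑ s, pd (pd f s) l x * pd (pd f s) k x) :=
      continuous_finsetSum _ fun s _ => ((hn s).cpd l).mul ((hn s).cpd k)
    refine (memLp_two_iff_integrable_sq c.aestronglyMeasurable).2 ?_
    exact ((SE.sum Finset.univ fun s => ((hn s).sed l).mul ((hn s).sed k)).pow 2).integrable
      (gam ι) () (c.pow 2)
  have L2 : ∀ l k, MemLp (fun x => pd f l x * pd f k x) 2 (gam ι) := by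
    intro l k
    have c : Continuous (fun x => pd f l x * pd f k x) :=
      (hn l).cd.continuous.mul (hn k).cd.continuous
    refine (memLp_two_iff_integrable_sq c.aestronglyMeasurable).2 ?_
    exact (((hn l).se.mul (hn k).se).pow 2).integrable (gam ι) () (c.pow 2)
  have L1' := fun l k => (L1 l k).comp_measurePreserving hU
  have L2' := fun l k => (L2 l k).comp_measurePreserving hV
  simp only [Function.comp_def] at L1' L2'
  have I : ∀ l k, Integrable (fun z => (∑ s, pd (pd f s) l (U z) * pd (pd f s) k (U z)) 
          * (pd f l (V z) * pd f k (V z))) Q := fun l k => (L1' l k).integrable_mul (L2' l k)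
  refine ⟨integrable_finsetSum _ fun l _ => integrable_finsetSum _ fun k _ => I l k, ?_⟩
  rw [integral_finsetSum _ fun l _ => integrable_finsetSum _ fun k _ => I l k]
  refine Finset.sum_le_sum fun l _ => ?_
  rw [integral_finsetSum _ fun k _ => I l k]
  refine Finset.sum_le_sum fun k _ => ?_
  refine (cs_ineq Q (L1' l k) (L2' l k)).trans (le_of_eq ?_)
  have t1 := integral_map hU.measurable.aemeasurable 
    (f := fun x => (∑ s, pd (pd f s) l x * pd (pd f s) k x) ^ 2)
    (by rw [hU.map_eq]; exact (L1 l k).1.pow 2)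
  have t2 := integral_map hV.measurable.aemeasurable 
    (f := fun x => (pd f l x * pd f k x) ^ 2)
    (by rw [hV.map_eq]; exact (L2 l k).1.pow 2)
  rw [hU.map_eq] at t1
  rw [hV.map_eq] at t2
  rw [t1, t2]

/-- splitting of a vector indexed by a sum -/
noncomputable def spl : (ι ⊕ ι → ℝ) →L[ℝ] (ι → ℝ) × (ι → ℝ) :=
  (ContinuousLinearMap.pi fun i => ContinuousLinearMap.proj (Sum.inl i)).prod
  (ContinuousLinearMap.pi fun i => ContinuousLinearMap.proj (Sum.inr i))

lemma mp_spl : MeasurePreserving (spl (ι := ι)) (gam (ι ⊕ ι)) ((gam ι).prod (gam ι)) := 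
  measurePreserving_sumPiEquivProdPi (fun _ : ι ⊕ ι => gaussianReal 0 1)

/-- mix as a continuous linear map -/
noncomputable def mixL (θ : ℝ) : (ι → ℝ) × (ι → ℝ) →L[ℝ] (ι → ℝ) :=
  Real.sin θ • ContinuousLinearMap.fst ℝ _ _ + Real.cos θ • ContinuousLinearMap.snd ℝ _ _

lemma mixL_apply (θ : ℝ) (p : (ι → ℝ) × (ι → ℝ)) : mixL θ p = mix θ p := by
  simp [mixL, mix]

lemma spl_inl (m : ι) : spl (Pi.single (Sum.inl m) 1 : ι ⊕ ι → ℝ) = (Pi.single m 1, 0) := by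
  ext i
  · simp [spl, Pi.single_apply]
  · simp [spl]

lemma spl_inr (m : ι) : spl (Pi.single (Sum.inr m) 1 : ι ⊕ ι → ℝ) = (0, Pi.single m 1) := by
  ext i
  · simp [spl]
  · simp [spl, Pi.single_apply]

lemma pd_K {f : (ι → ℝ) → ℝ} (hn : ∀ l, Nice (pd f l)) (θ : ℝ) (z v : ι ⊕ ι → ℝ) :
    fderiv ℝ (fun z => ∑ l, pd f l (spl z).1 * pd f l (mix θ (spl z))) z v
    = ∑ l, (fderiv ℝ (pd f l) (spl z).1 (spl v).1 * pd f l (mix θ (spl z)) +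
        fderiv ℝ (pd f l) (mix θ (spl z)) (mix θ (spl v)) * pd f l (spl z).1) := by
  have h1 : ∀ l, HasFDerivAt (fun z => pd f l (spl z).1) ((fderiv ℝ (pd f l) (spl z).1).comp
      ((ContinuousLinearMap.fst ℝ (ι → ℝ) (ι → ℝ)).comp spl)) z := fun l =>
    HasFDerivAt.comp (g := pd f l) (f := fun z : ι ⊕ ι → ℝ => (spl z).1) z
      (((hn l).cd.differentiable one_ne_zero (spl z).1).hasFDerivAt)
      ((ContinuousLinearMap.fst ℝ (ι → ℝ) (ι → ℝ)).comp spl).hasFDerivAt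
  have h2 : ∀ l, HasFDerivAt (fun z => pd f l (mix θ (spl z)))
      ((fderiv ℝ (pd f l) (mix θ (spl z))).comp ((mixL θ).comp spl)) z := fun l =>
    HasFDerivAt.comp (g := pd f l) (f := fun z : ι ⊕ ι → ℝ => mix θ (spl z)) z
      (((hn l).cd.differentiable one_ne_zero (mix θ (spl z))).hasFDerivAt)
      (by
        have := ((mixL θ).comp (spl (ι := ι))).hasFDerivAt (x := z)
        refine this.congr_of_eventuallyEq (Filter.Eventually.of_forall fun y => ?_)
        simp [mixL_apply])
  have h3 := HasFDerivAt.fun_sum (u := Finset.univ) fun l _ => (h1 l).fun_mul (h2 l)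
  rw [h3.fderiv]
  simp only [ContinuousLinearMap.sum_apply]
  refine Finset.sum_congr rfl fun l _ => ?_
  simp [mixL_apply]
  ring

lemma nice_K {f : (ι → ℝ) → ℝ} (hn : ∀ l, Nice (pd f l)) (θ : ℝ) :
    Nice (fun z : ι ⊕ ι → ℝ => ∑ l, pd f l (spl z).1 * pd f l (mix θ (spl z))) where
  cd := by
    refine ContDiff.sum fun l _ => ContDiff.mul ?_ ?_
    · exact (hn l).cd.comp ((ContinuousLinearMap.fst ℝ (ι → ℝ) (ι → ℝ)).comp spl).contDiff
    · have := (hn l).cd.comp ((mixL θ).comp spl).contDiff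
      simpa only [Function.comp_def, mixL_apply, ContinuousLinearMap.comp_apply] using this
  se := by
    have := SE.sum Finset.univ fun l => (hn l).se.fst.mul ((hn l).se.mix (fun _ : Unit => θ))
    exact this.comp id (fun _ z => spl z) ‖spl (ι := ι)‖ (norm_nonneg _)
      (fun _ z => spl.le_opNorm z)
  sed j := by
    simp only [pd_K hn]
    have hS : ∀ {F : (ι → ℝ) × (ι → ℝ) → ℝ}, SE (fun (_ : Unit) p => F p) →
      SE (fun (_ : Unit) (z : ι ⊕ ι → ℝ) => F (spl z)) := fun hF =>
      hF.comp id (fun _ z => spl z) ‖spl (ι := ι)‖ (norm_nonneg _) (fun _ z => spl.le_opNorm z)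
    have hfd : ∀ l (v : ι → ℝ), SE (fun (_ : Unit) (x : ι → ℝ) => fderiv ℝ (pd f l) x v) := by
      intro l v
      simp only [fderiv_eq_sum _ _ v]
      exact SE.sum _ fun i => (SE.const _).mul ((hn l).sed i)
    refine SE.sum _ fun l => ?_
    refine hS (F := fun p => fderiv ℝ (pd f l) p.1 (spl (Pi.single j 1)).1 * pd f l (mix θ p)
      + fderiv ℝ (pd f l) (mix θ p) (mix θ (spl (Pi.single j 1))) * pd f l p.1) ?_
    exact ((hfd l _).fst.mul ((hn l).se.mix (fun _ : Unit => θ))).add 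
      (((hfd l _).mix (fun _ : Unit => θ)).mul (hn l).se.fst)

lemma var_bound {f : (ι → ℝ) → ℝ} (hf : ContDiff ℝ 2 f) (hn : ∀ l, Nice (pd f l)) (θ : ℝ) :
    ∫ p, ((∑ i, pd f i p.1 * pd f i (mix θ p)) - covI f f θ) ^ 2 ∂((gam ι).prod (gam ι))
      ≤ 4 * SS f := by
  have M := mp_spl (ι := ι)
  have cK : Continuous (fun p : (ι → ℝ) × (ι → ℝ) => ∑ i, pd f i p.1 * pd f i (mix θ p)) :=
    continuous_finsetSum _ fun i _ => ((hn i).cd.continuous.comp continuous_fst).mul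
      ((hn i).cd.continuous.comp (continuous_mix θ))
  have t1 := integral_map (μ := gam (ι ⊕ ι)) M.measurable.aemeasurable
    (f := fun p => (∑ i, pd f i p.1 * pd f i (mix θ p)))
    (by rw [M.map_eq]; exact cK.aestronglyMeasurable)
  have t2 := integral_map (μ := gam (ι ⊕ ι)) M.measurable.aemeasurable
    (f := fun p => ((∑ i, pd f i p.1 * pd f i (mix θ p)) - covI f f θ) ^ 2)
    (by rw [M.map_eq]; exact ((cK.sub continuous_const).pow 2).aestronglyMeasurable)
  rw [M.map_eq] at t1 t2
  rw [t2]
  have hc : covI f f θ = ∫ z, ∑ i, pd f i (spl z).1 * pd f i (mix θ (spl z)) ∂(gam (ι ⊕ ι)) := t1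
  rw [hc]
  refine (poincare (nice_K hn θ)).trans ?_
  have U : MeasurePreserving (fun z => (spl z).1) (gam (ι ⊕ ι)) (gam ι) :=
    measurePreserving_fst.comp M
  have V : MeasurePreserving (fun z => mix θ (spl z)) (gam (ι ⊕ ι)) (gam ι) :=
    (mp_mix θ).comp M
  obtain ⟨I1, B1⟩ := quad_bound _ hf hn U V
  obtain ⟨I2, B2⟩ := quad_bound _ hf hn V U
  have hN := nice_K hn θ
  have : ∫ z, ∑ j, pd (fun z : ι ⊕ ι → ℝ => ∑ l, pd f l (spl z).1 * pd f l (mix θ (spl z))) j z ^ 2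
      ∂(gam (ι ⊕ ι)) ≤ ∫ z, (2 * (∑ m, (∑ l, pd (pd f l) m (spl z).1 * pd f l (mix θ (spl z))) ^ 2)
        + 2 * ∑ m, (∑ l, pd (pd f l) m (mix θ (spl z)) * pd f l (spl z).1) ^ 2)
          ∂(gam (ι ⊕ ι)) := by
    refine integral_mono (integrable_finsetSum _ fun j _ => 
      (((hN.sed j).pow 2).integrable (gam (ι ⊕ ι)) () ((hN.cpd j).pow 2)))
      ((I1.const_mul 2).add (I2.const_mul 2)) fun z => ?_
    simp only [pd, Fintype.sum_sum_type]
    rw [Finset.mul_sum, Finset.mul_sum, ← Finset.sum_add_distrib, ← Finset.sum_add_distrib]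
    refine Finset.sum_le_sum fun m _ => ?_
    have e1 := pd_K hn θ z (Pi.single (Sum.inl m) 1)
    have e2 := pd_K hn θ z (Pi.single (Sum.inr m) 1)
    simp only [spl_inl, spl_inr, mix, smul_zero, add_zero, zero_add, map_smul, smul_eq_mul, map_zero,
      zero_mul, mul_assoc, Finset.sum_add_distrib, ← Finset.mul_sum] at e1 e2
    simp only [mix]
    simp only [pd] at e1 e2
    rw [e1, e2]
    generalize (∑ l, (fderiv ℝ (fun x => fderiv ℝ f x (Pi.single l 1)) (spl z).1) (Pi.single m 1) * _) = A
    generalize (∑ l, (fderiv ℝ (fun x => fderiv ℝ f x (Pi.single l 1)) _) (Pi.single m 1) * _) = B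
    have hsc := Real.sin_sq_add_cos_sq θ
    have hs := Real.abs_sin_le_one θ
    have h3 : (A + Real.sin θ * B) ^ 2 + (Real.cos θ * B) ^ 2
       = A ^ 2 + 2 * Real.sin θ * (A * B) + B ^ 2 := by
      linear_combination B ^ 2 * hsc
    rw [h3]
    rw [abs_le] at hs
    nlinarith [mul_nonneg (by linarith : 0 ≤ 1 + Real.sin θ) (sq_nonneg (A - B)),
      mul_nonneg (by linarith : 0 ≤ 1 - Real.sin θ) (sq_nonneg (A + B))]
  refine this.trans ?_
  rw [integral_add (I1.const_mul 2) (I2.const_mul 2), integral_const_mul, integral_const_mul]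
  linarith
end varb
section steinsol
open Set Filter Topology

/-- standard Gaussian density -/
noncomputable abbrev gq : ℝ → ℝ := gaussianPDFReal 0 1

lemma gq_pos (x : ℝ) : 0 < gq x := gaussianPDFReal_pos 0 1 x one_ne_zero

lemma gq_int : Integrable gq := integrable_gaussianPDFReal 0 1

lemma gq_cont : Continuous gq :=
  continuous_iff_continuousAt.2 fun x => (hasDerivAt_pdf x).continuousAt

lemma gq_int_id : Integrable (fun x => -x * gq x) := by
  have h : Integrable (fun x : ℝ => x) (gaussianReal 0 1) :=
    (memLp_id_gaussianReal (μ := 0) (v := 1) 1).integrable (by simp)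
  refine (integrable_pdf_mul h).neg.congr (ae_of_all _ fun x => ?_)
  simp; ring

lemma gq_mills_Ioi (x : ℝ) : x * ∫ y in Ioi x, gq y ≤ gq x := by
  have t : Tendsto gq atTop (𝓝 0) := tendsto_zero_of_hasDerivAt_of_integrableOn_Ioi (a := x)
    (fun y _ => hasDerivAt_pdf y) gq_int_id.integrableOn gq_int.integrableOn
  have h := integral_Ioi_of_hasDerivAt_of_tendsto' (a := x)
    (fun y _ => hasDerivAt_pdf y) gq_int_id.integrableOn t
  have h2 : ∫ y in Ioi x, x * gq y ≤ ∫ y in Ioi x, -(-y * gq y) := by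
    refine setIntegral_mono_on (gq_int.const_mul x).integrableOn gq_int_id.neg.integrableOn
      measurableSet_Ioi fun y hy => ?_
    have := (gq_pos y).le
    have hy' : x < y := hy
    nlinarith
  rw [integral_const_mul, integral_neg, h] at h2
  linarith

lemma gq_mills_Iic (x : ℝ) : -x * ∫ y in Iic x, gq y ≤ gq x := by
  have t : Tendsto gq atBot (𝓝 0) := tendsto_zero_of_hasDerivAt_of_integrableOn_Iic (a := x)
    (fun y _ => hasDerivAt_pdf y) gq_int_id.integrableOn gq_int.integrableOn
  have h := integral_Iic_of_hasDerivAt_of_tendsto' (a := x)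
    (fun y _ => hasDerivAt_pdf y) gq_int_id.integrableOn t
  have h2 : ∫ y in Iic x, -x * gq y ≤ ∫ y in Iic x, (-y * gq y) := by
    refine setIntegral_mono_on (gq_int.const_mul _).integrableOn gq_int_id.integrableOn
      measurableSet_Iic fun y hy => ?_
    have := (gq_pos y).le
    have hy' : y ≤ x := hy
    nlinarith
  rw [integral_const_mul, h] at h2
  linarith

lemma hasDerivAt_Iic {g : ℝ → ℝ} (hg : Continuous g) (hi : Integrable g) (x : ℝ) :
    HasDerivAt (fun x => ∫ y in Iic x, g y) (g x) x := by
  have e : (fun x => ∫ y in Iic x, g y) = fun x => (∫ y in Iic 0, g y) + ∫ y in (0:ℝ)..x, g y := by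
    ext x
    rw [← intervalIntegral.integral_Iic_sub_Iic hi.integrableOn hi.integrableOn]
    ring
  rw [e]
  exact (intervalIntegral.integral_hasDerivAt_right (hi.intervalIntegrable)
    (hg.stronglyMeasurableAtFilter _ _) hg.continuousAt).const_add _

/-- The solution of the Stein equation. -/
noncomputable def psi (h : ℝ → ℝ) (x : ℝ) : ℝ :=
  (∫ y in Iic x, (h y - ∫ z, h z ∂(gaussianReal 0 1)) * gq y) / gq x

lemma int_hq {h : ℝ → ℝ} (hc : Continuous h) (h0 : ∀ x, 0 ≤ h x) (h1 : ∀ x, h x ≤ 1) :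
    Integrable (fun y => h y * gq y) :=
  gq_int.mono' (hc.mul gq_cont).aestronglyMeasurable (ae_of_all _ fun x => by
    rw [Real.norm_eq_abs, abs_of_nonneg (mul_nonneg (h0 x) (gq_pos x).le)]
    exact mul_le_of_le_one_left (gq_pos x).le (h1 x))

lemma psi_deriv {h : ℝ → ℝ} (hc : Continuous h) (h0 : ∀ x, 0 ≤ h x) (h1 : ∀ x, h x ≤ 1) (x : ℝ) :
    HasDerivAt (psi h) (h x - (∫ z, h z ∂(gaussianReal 0 1)) + x * psi h x) x := by
  set m := ∫ z, h z ∂(gaussianReal 0 1) with hm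
  have I : Integrable (fun y => (h y - m) * gq y) := by
    refine ((int_hq hc h0 h1).sub (gq_int.const_mul m)).congr (ae_of_all _ fun x => ?_)
    simp; ring
  have cI : Continuous (fun y => (h y - m) * gq y) := (hc.sub continuous_const).mul gq_cont
  have := (hasDerivAt_Iic cI I x).fun_div (hasDerivAt_pdf x) (gq_pos x).ne'
  refine this.congr_deriv ?_
  have hp := (gq_pos x).ne'
  simp only [psi, ← hm]
  field_simp
  ring

lemma psi_bound {h : ℝ → ℝ} (hc : Continuous h) (h0 : ∀ x, 0 ≤ h x) (h1 : ∀ x, h x ≤ 1)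
    (ha : Antitone h) (x : ℝ) :
    |h x - (∫ z, h z ∂(gaussianReal 0 1)) + x * psi h x| ≤ 1 := by
  have hI := int_hq hc h0 h1
  set Φ := ∫ y in Iic x, gq y with hΦ
  set A := ∫ y in Iic x, h y * gq y with hA
  set B := ∫ y in Ioi x, h y * gq y with hB
  have hΦ' : ∫ y in Ioi x, gq y = 1 - Φ := by
    have := intervalIntegral.integral_Iic_add_Ioi (b := x) gq_int.integrableOn gq_int.integrableOn
    rw [integral_gaussianPDFReal_eq_one 0 one_ne_zero] at this
    linarith
  have hm : ∫ z, h z ∂(gaussianReal 0 1) = A + B := by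
    rw [integral_gaussianReal_eq_integral_smul one_ne_zero,
      ← intervalIntegral.integral_Iic_add_Ioi (b := x)]
    · simp [hA, hB, mul_comm]
    · refine Integrable.integrableOn ?_
      simpa [mul_comm] using hI
    · refine Integrable.integrableOn ?_
      simpa [mul_comm] using hI
  have hpsi : psi h x = ((1 - Φ) * A - Φ * B) / gq x := by
    unfold psi
    congr 1
    rw [hm]
    simp only [sub_mul]
    rw [integral_sub hI.integrableOn (gq_int.const_mul _).integrableOn, integral_const_mul]
    ring
  have mi1 := gq_mills_Ioi x
  rw [hΦ'] at mi1
  have mi2 : -x * Φ ≤ gq x := gq_mills_Iic x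
  have p0 := gq_pos x
  have Φ0 : 0 ≤ Φ := setIntegral_nonneg measurableSet_Iic fun y _ => (gq_pos y).le
  have Φ1 : 0 ≤ 1 - Φ := by
    rw [← hΦ']; exact setIntegral_nonneg measurableSet_Ioi fun y _ => (gq_pos y).le
  have A1 : A ≤ Φ := setIntegral_mono_on hI.integrableOn gq_int.integrableOn measurableSet_Iic
    fun y _ => mul_le_of_le_one_left (gq_pos y).le (h1 y)
  have A0 : h x * Φ ≤ A := by
    rw [hΦ, ← integral_const_mul]
    exact setIntegral_mono_on (gq_int.const_mul _).integrableOn hI.integrableOn measurableSet_Iic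
      fun y hy => mul_le_mul_of_nonneg_right (ha hy) (gq_pos y).le
  have B0 : 0 ≤ B := setIntegral_nonneg measurableSet_Ioi fun y _ =>
    mul_nonneg (h0 y) (gq_pos y).le
  have B1 : B ≤ h x * (1 - Φ) := by
    rw [← hΦ', ← integral_const_mul]
    exact setIntegral_mono_on hI.integrableOn (gq_int.const_mul _).integrableOn measurableSet_Ioi
      fun y hy => mul_le_mul_of_nonneg_right (ha (le_of_lt hy)) (gq_pos y).le
  rw [hpsi, hm]
  set a := x * (1 - Φ) / gq x with ha'
  set b := x * Φ / gq x with hb'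
  have a1 : a ≤ 1 := by rw [ha', div_le_one p0]; exact mi1
  have b1 : 0 ≤ 1 + b := by
    have : -1 ≤ b := by rw [hb', le_div_iff₀ p0]; linarith
    linarith
  have e : h x - (A + B) + x * (((1 - Φ) * A - Φ * B) / gq x)
      = h x - A * (1 - a) - B * (1 + b) := by
    rw [ha', hb']; field_simp; ring
  have eab : a * Φ = b * (1 - Φ) := by rw [ha', hb']; field_simp
  rw [e]
  have hx0 := h0 x
  have hx1 := h1 x
  have a1' : 0 ≤ 1 - a := by linarith
  have q1 := mul_le_mul_of_nonneg_right A0 a1'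
  have q2 := mul_nonneg B0 b1
  have q3 := mul_le_mul_of_nonneg_right A1 a1'
  have q4 := mul_le_mul_of_nonneg_right B1 b1
  have r1 : Φ * (1 - a) ≤ 1 := by nlinarith
  have r2 : 0 ≤ Φ * (1 - a) := by positivity
  rw [abs_le]
  constructor
  · nlinarith
  · nlinarith

lemma psi'_cont {h : ℝ → ℝ} (hc : Continuous h) (h0 : ∀ x, 0 ≤ h x) (h1 : ∀ x, h x ≤ 1) :
    Continuous (fun x => h x - (∫ z, h z ∂(gaussianReal 0 1)) + x * psi h x) := by
  have : Continuous (psi h) := continuous_iff_continuousAt.2 fun x =>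
    (psi_deriv hc h0 h1 x).continuousAt
  fun_prop

lemma psi_growth {h : ℝ → ℝ} (hc : Continuous h) (h0 : ∀ x, 0 ≤ h x) (h1 : ∀ x, h x ≤ 1)
    (ha : Antitone h) (x : ℝ) : |psi h x| ≤ |psi h 0| + |x| := by
  have := Convex.norm_image_sub_le_of_norm_hasDerivWithin_le (s := univ) (C := 1) (f := psi h)
    (fun y _ => (psi_deriv hc h0 h1 y).hasDerivWithinAt)
    (fun y _ => psi_bound hc h0 h1 ha y) convex_univ (mem_univ 0) (mem_univ x)
  simp only [Real.norm_eq_abs, sub_zero, one_mul] at this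
  have h2 := abs_sub_abs_le_abs_sub (psi h x) (psi h 0)
  linarith
end steinsol
section smooth
variable {ι : Type} [Fintype ι] [DecidableEq ι]

lemma nice_phi {f : (ι → ℝ) → ℝ} (hf : Nice f) {ψ w : ℝ → ℝ} (hψ : ∀ x, HasDerivAt ψ (w x) x)
    (hw : Continuous w) (hw1 : ∀ x, |w x| ≤ 1) (hg : ∀ x, |ψ x| ≤ |ψ 0| + |x|)
    {s : ℝ} (hs : 0 < s) :
    Nice (fun x => s * ψ (f x / s)) ∧
      ∀ i x, pd (fun x => s * ψ (f x / s)) i x = w (f x / s) * pd f i x := by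
  have hpd : ∀ i x, pd (fun x => s * ψ (f x / s)) i x = w (f x / s) * pd f i x := by
    intro i x
    have hd := ((hf.cd.differentiable one_ne_zero) x).hasFDerivAt
    have h1 : HasFDerivAt (fun x => f x / s) (s⁻¹ • fderiv ℝ f x) x := by
      simpa [div_eq_mul_inv, mul_comm] using hd.const_mul s⁻¹
    have h2 := ((hψ (f x / s)).comp_hasFDerivAt x h1).const_mul s
    have h3 : HasFDerivAt (fun x => s * ψ (f x / s)) _ x := h2
    simp only [pd]
    rw [h3.fderiv]
    simp only [ContinuousLinearMap.smul_apply, smul_eq_mul]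
    field_simp
  refine ⟨⟨?_, ?_, ?_⟩, hpd⟩
  · have hcd : ContDiff ℝ 1 ψ := by
      rw [contDiff_one_iff_deriv]
      refine ⟨fun x => (hψ x).differentiableAt, ?_⟩
      have : deriv ψ = w := funext fun x => (hψ x).deriv
      rw [this]; exact hw
    exact contDiff_const.mul (hcd.comp (hf.cd.div_const s))
  · refine SE.mono (((SE.const (s * |ψ 0|)).add (hf.se.pow 2)).add (SE.const 1)) fun _ x => ?_
    rw [abs_mul, abs_of_pos hs]
    have := hg (f x / s)
    rw [abs_div, abs_of_pos hs] at this
    have h4 : s * |ψ (f x / s)| ≤ s * |ψ 0| + |f x| := by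
      have := mul_le_mul_of_nonneg_left this hs.le
      rw [mul_add, mul_div_cancel₀ _ hs.ne'] at this
      exact this
    refine h4.trans (le_trans ?_ (le_abs_self _))
    have := sq_abs (f x)
    nlinarith [sq_nonneg (|f x| - 1), abs_nonneg (f x)]
  · intro i
    refine SE.mono (hf.sed i) fun _ x => ?_
    have := hpd i x
    simp only [pd] at this
    rw [this, abs_mul]
    exact mul_le_of_le_one_left (abs_nonneg _) (hw1 _)

lemma smooth_bound {f : (ι → ℝ) → ℝ} (hf2 : ContDiff ℝ 2 f) (hf : Nice f)
    (hn : ∀ l, Nice (pd f l)) {σ2 : ℝ} (hσ : 0 < σ2)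
    (hmean : ∫ x, f x ∂(gam ι) = 0) (hvar : ∫ x, f x ^ 2 ∂(gam ι) = σ2)
    {h : ℝ → ℝ} (hc : Continuous h) (h0 : ∀ x, 0 ≤ h x) (h1 : ∀ x, h x ≤ 1) (ha : Antitone h) :
    |∫ x, h (f x / √σ2) ∂(gam ι) - ∫ z, h z ∂(gaussianReal 0 1)| ≤ 2 / σ2 * √(SS f) := by
  have hs : 0 < √σ2 := Real.sqrt_pos.2 hσ
  have hss : √σ2 * √σ2 = σ2 := Real.mul_self_sqrt hσ.le
  set s := √σ2 with hsdef
  set m := ∫ z, h z ∂(gaussianReal 0 1) with hm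
  obtain ⟨nφ, hpd⟩ := nice_phi hf (psi_deriv hc h0 h1) (psi'_cont hc h0 h1)
    (psi_bound hc h0 h1 ha) (psi_growth hc h0 h1 ha) hs
  have fc := hf.cd.continuous
  have cw : Continuous (fun x => h (f x / s) - m + f x / s * psi h (f x / s)) :=
    (psi'_cont hc h0 h1).comp (fc.div_const s)
  have hSS : 0 ≤ SS f := Finset.sum_nonneg fun l _ => Finset.sum_nonneg fun k _ => by
    refine mul_nonneg (Real.rpow_nonneg (integral_nonneg fun x => sq_nonneg _) _)
      (Real.rpow_nonneg (integral_nonneg fun x => sq_nonneg _) _)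
  have key := stein_abs hf nφ cw (fun x => psi_bound hc h0 h1 ha (f x / s)) hpd σ2 (2 * √(SS f))
    (by positivity) hmean hvar (fun θ => (var_bound hf2 hn θ).trans (le_of_eq (by
      rw [mul_pow, Real.sq_sqrt hSS]; norm_num)))
  have Iw : Integrable (fun x => h (f x / s) - m + f x / s * psi h (f x / s)) (gam ι) :=
    (integrable_const (1:ℝ)).mono' cw.aestronglyMeasurable
      (ae_of_all _ fun x => psi_bound hc h0 h1 ha (f x / s))
  have Iφ : Integrable (fun x => s * psi h (f x / s) * f x) (gam ι) :=
    (nφ.se.mul hf.se).integrable (gam ι) () (nφ.cd.continuous.mul fc)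
  have Ih : Integrable (fun x => h (f x / s)) (gam ι) :=
    (integrable_const (1:ℝ)).mono' (hc.comp (fc.div_const s)).aestronglyMeasurable
      (ae_of_all _ fun x => by
        rw [Real.norm_eq_abs, abs_of_nonneg (h0 _)]; exact h1 _)
  have e : σ2 * ∫ x, (h (f x / s) - m + f x / s * psi h (f x / s)) ∂(gam ι)
      - ∫ x, s * psi h (f x / s) * f x ∂(gam ι) = σ2 * (∫ x, h (f x / s) ∂(gam ι) - m) := by
    rw [← integral_const_mul, ← integral_sub (Iw.const_mul _) Iφ]
    have : ∫ x, h (f x / s) ∂(gam ι) - m = ∫ x, (h (f x / s) - m) ∂(gam ι) := by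
      rw [integral_sub Ih (integrable_const _)]; simp
    rw [this, ← integral_const_mul]
    refine integral_congr_ae (ae_of_all _ fun x => ?_)
    simp only
    rw [← hss]
    field_simp
    ring
  rw [e, abs_mul, abs_of_pos hσ] at key
  rw [div_mul_eq_mul_div, le_div_iff₀ hσ]
  linarith

/-- piecewise linear approximation of the indicator of `(-∞, a]` -/
noncomputable def ramp (a ε x : ℝ) : ℝ := max 0 (min 1 (1 - (x - a) / ε))

lemma ramp_cont (a ε : ℝ) : Continuous (ramp a ε) := by unfold ramp; fun_prop
lemma ramp_nn (a ε x : ℝ) : 0 ≤ ramp a ε x := le_max_left _ _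
lemma ramp_le (a ε x : ℝ) : ramp a ε x ≤ 1 := max_le zero_le_one (min_le_left _ _)
lemma ramp_anti (a : ℝ) {ε : ℝ} (hε : 0 < ε) : Antitone (ramp a ε) := by
  intro x y hxy
  unfold ramp
  gcongr
lemma ramp_one (a : ℝ) {ε : ℝ} (hε : 0 < ε) {x : ℝ} (hx : x ≤ a) : ramp a ε x = 1 := by
  unfold ramp
  have : (x - a) / ε ≤ 0 := div_nonpos_of_nonpos_of_nonneg (by linarith) hε.le
  rw [min_eq_left (by linarith)]; simp
lemma ramp_zero (a : ℝ) {ε : ℝ} (hε : 0 < ε) {x : ℝ} (hx : a + ε ≤ x) : ramp a ε x = 0 := by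
  unfold ramp
  have : 1 ≤ (x - a) / ε := by rw [le_div_iff₀ hε]; linarith
  rw [min_eq_right (by linarith), max_eq_left (by linarith)]

lemma ramp_sandwich {Ω : Type*} [MeasurableSpace Ω] (Q : Measure Ω) [IsProbabilityMeasure Q]
    {g : Ω → ℝ} (hg : Measurable g) (a : ℝ) {ε : ℝ} (hε : 0 < ε) :
    Q.real {x | g x ≤ a} ≤ ∫ x, ramp a ε (g x) ∂Q ∧
      ∫ x, ramp a ε (g x) ∂Q ≤ Q.real {x | g x ≤ a + ε} := by
  have I : Integrable (fun x => ramp a ε (g x)) Q :=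
    (integrable_const (1:ℝ)).mono' ((ramp_cont a ε).measurable.comp hg).aestronglyMeasurable
      (ae_of_all _ fun x => by
        rw [Real.norm_eq_abs, abs_of_nonneg (ramp_nn _ _ _)]; exact ramp_le _ _ _)
  have ms : ∀ c, MeasurableSet {x | g x ≤ c} := fun c => measurableSet_le hg measurable_const
  constructor
  · rw [← integral_indicator_one (ms a)]
    refine integral_mono ((integrable_const (1:ℝ)).indicator (ms a)) I fun x => ?_
    by_cases hx : g x ≤ a
    · rw [Set.indicator_of_mem (by exact hx), ramp_one a hε hx]; simp
    · rw [Set.indicator_of_notMem (by exact hx)]; exact ramp_nn _ _ _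
  · rw [← integral_indicator_one (ms (a + ε))]
    refine integral_mono I ((integrable_const (1:ℝ)).indicator (ms (a + ε))) fun x => ?_
    by_cases hx : g x ≤ a + ε
    · rw [Set.indicator_of_mem (by exact hx)]; exact ramp_le _ _ _
    · rw [Set.indicator_of_notMem (by exact hx), ramp_zero a hε (le_of_lt (not_le.1 hx))]

lemma ks_bound {f : (ι → ℝ) → ℝ} (hf2 : ContDiff ℝ 2 f) (hf : Nice f)
    (hn : ∀ l, Nice (pd f l)) {σ2 : ℝ} (hσ : 0 < σ2)
    (hmean : ∫ x, f x ∂(gam ι) = 0) (hvar : ∫ x, f x ^ 2 ∂(gam ι) = σ2) (a : ℝ) :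
    |(gam ι).real {x | f x / √σ2 ≤ a} - (gaussianReal 0 1).real (Set.Iic a)|
      ≤ 2 / σ2 * √(SS f) := by
  set C := 2 / σ2 * √(SS f)
  have hfm : Measurable (fun x => f x / √σ2) := (hf.cd.continuous.div_const _).measurable
  have hcont : Continuous (fun c => (gaussianReal 0 1).real (Set.Iic c)) := by
    have e : (fun c => (gaussianReal 0 1).real (Set.Iic c)) = fun c => ∫ y in Set.Iic c, gq y := by
      ext c
      rw [Measure.real, gaussianReal_apply_eq_integral 0 one_ne_zero, ENNReal.toReal_ofReal]
      exact setIntegral_nonneg measurableSet_Iic fun y _ => (gq_pos y).le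
    rw [e]
    exact continuous_iff_continuousAt.2 fun x => (hasDerivAt_Iic gq_cont gq_int x).continuousAt
  have sb := fun (b ε : ℝ) (hε : 0 < ε) => smooth_bound hf2 hf hn hσ hmean hvar (ramp_cont b ε)
    (ramp_nn b ε) (ramp_le b ε) (ramp_anti b hε)
  have up : ∀ ε > 0, (gam ι).real {x | f x / √σ2 ≤ a} ≤
      (gaussianReal 0 1).real (Set.Iic (a + ε)) + C := by
    intro ε hε
    have h1 := (ramp_sandwich (gam ι) hfm a hε).1
    have h2 := (ramp_sandwich (gaussianReal 0 1) (g := fun x => x) measurable_id a hε).2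
    have h3 := (abs_le.1 (sb a ε hε)).2
    have h4 : {x : ℝ | x ≤ a + ε} = Set.Iic (a + ε) := rfl
    rw [h4] at h2
    linarith
  have lo : ∀ ε > 0, (gaussianReal 0 1).real (Set.Iic (a - ε)) - C ≤
      (gam ι).real {x | f x / √σ2 ≤ a} := by
    intro ε hε
    have h1 := (ramp_sandwich (gam ι) hfm (a - ε) hε).2
    have h2 := (ramp_sandwich (gaussianReal 0 1) (g := fun x => x) measurable_id (a - ε) hε).1
    have h3 := (abs_le.1 (sb (a - ε) ε hε)).1
    have h4 : {x : ℝ | x ≤ a - ε} = Set.Iic (a - ε) := rfl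
    rw [h4] at h2
    rw [sub_add_cancel] at h1
    linarith
  have tu : Filter.Tendsto (fun ε => (gaussianReal 0 1).real (Set.Iic (a + ε)) + C)
      (nhdsWithin 0 (Set.Ioi 0)) (nhds ((gaussianReal 0 1).real (Set.Iic a) + C)) := by
    have : Continuous (fun ε => (gaussianReal 0 1).real (Set.Iic (a + ε)) + C) :=
      (hcont.comp (continuous_const.add continuous_id)).add continuous_const
    have := this.tendsto 0
    rw [add_zero] at this
    exact this.mono_left nhdsWithin_le_nhds
  have tl : Filter.Tendsto (fun ε => (gaussianReal 0 1).real (Set.Iic (a - ε)) - C)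
      (nhdsWithin 0 (Set.Ioi 0)) (nhds ((gaussianReal 0 1).real (Set.Iic a) - C)) := by
    have : Continuous (fun ε => (gaussianReal 0 1).real (Set.Iic (a - ε)) - C) :=
      (hcont.comp (continuous_const.sub continuous_id)).sub continuous_const
    have := this.tendsto 0
    rw [sub_zero] at this
    exact this.mono_left nhdsWithin_le_nhds
  have r1 := ge_of_tendsto tu (Filter.eventually_of_mem self_mem_nhdsWithin up)
  have r2 := le_of_tendsto tl (Filter.eventually_of_mem self_mem_nhdsWithin lo)
  rw [abs_le]
  constructor <;> linarith
end smooth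

lemma sqrt_sum_le {d : ℕ} (x : Fin d → ℝ) : √(∑ i, (x i) ^ 2) ≤ √d * ‖x‖ := by
  rw [← Real.sqrt_sq (norm_nonneg x), ← Real.sqrt_mul (Nat.cast_nonneg d)]
  refine Real.sqrt_le_sqrt ?_
  calc ∑ i, (x i) ^ 2 ≤ ∑ _i : Fin d, ‖x‖ ^ 2 := Finset.sum_le_sum fun i _ => by
        rw [← sq_abs]
        exact pow_le_pow_left₀ (abs_nonneg _) (norm_le_pi_norm x i) 2
    _ = d * ‖x‖ ^ 2 := by simp

theorem second_order_poincare_ks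
    (d : ℕ) (hd : 1 ≤ d) (f : (Fin d → ℝ) → ℝ) (hf : ContDiff ℝ 2 f)
    --  and its partial derivatives of order up to two have sub-exponential growth
    (hgrowth : ∃ A B : ℝ, 0 < A ∧ 0 < B ∧ ∀ x : Fin d → ℝ,
      |f x| ≤ A * Real.exp (B * Real.sqrt (∑ i, (x i) ^ 2)) ∧
      (∀ l, |pderiv1 f l x| ≤ A * Real.exp (B * Real.sqrt (∑ i, (x i) ^ 2))) ∧
      (∀ l m, |pderiv2 f l m x| ≤ A * Real.exp (B * Real.sqrt (∑ i, (x i) ^ 2))))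
    (σ2 : ℝ) (hσ2pos : 0 < σ2)
    (hmean : ∫ x, f x ∂(Measure.pi fun _ : Fin d => gaussianReal 0 1) = 0)
    (hvar : ∫ x, (f x) ^ 2 ∂(Measure.pi fun _ : Fin d => gaussianReal 0 1) = σ2) :
    dKS
      (Measure.map f (Measure.pi fun _ : Fin d => gaussianReal 0 1))
      (gaussianReal 0 σ2.toNNReal)
      ≤ (2 / σ2)
        * Real.sqrt (∑ l, ∑ m,
            ((∫ x, (∑ s, pderiv2 f l s x * pderiv2 f m s x) ^ 2
                ∂(Measure.pi fun _ : Fin d => gaussianReal 0 1)) ^ ((1:ℝ)/2))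
            * ((∫ x, (pderiv1 f l x * pderiv1 f m x) ^ 2
                ∂(Measure.pi fun _ : Fin d => gaussianReal 0 1)) ^ ((1:ℝ)/2))) := by
  classical
  obtain ⟨A, B, hA, hB, H⟩ := hgrowth
  have hSE : ∀ g : (Fin d → ℝ) → ℝ, (∀ x, |g x| ≤ A * Real.exp (B * √(∑ i, (x i) ^ 2))) →
      SE (fun (_ : Unit) x => g x) := by
    intro g hg
    refine ⟨A, B * √d, hA.le, by positivity, fun _ x => (hg x).trans ?_⟩
    rw [mul_assoc]
    gcongr
    exact sqrt_sum_le x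
  have nf : Nice f := ⟨hf.of_le (by norm_num), hSE _ fun x => (H x).1,
    fun i => hSE _ fun x => (H x).2.1 i⟩
  have np : ∀ l, Nice (pd f l) := fun l =>
    ⟨(hf.fderiv_right (m := 1) (by norm_num)).clm_apply contDiff_const,
      hSE _ fun x => (H x).2.1 l, fun i => hSE _ fun x => (H x).2.2 i l⟩
  have hs : 0 < √σ2 := Real.sqrt_pos.2 hσ2pos
  refine ciSup_le fun z => ?_
  have key := ks_bound hf nf np hσ2pos hmean hvar (z / √σ2)
  have e1 : (Measure.map f (gam (Fin d)) (Set.Iic z)).toReal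
      = (gam (Fin d)).real {x | f x / √σ2 ≤ z / √σ2} := by
    rw [Measure.map_apply hf.continuous.measurable measurableSet_Iic, Measure.real]
    congr 2
    ext x
    simp [div_le_div_iff_of_pos_right hs]
  have e2 : (gaussianReal 0 σ2.toNNReal (Set.Iic z)).toReal
      = (gaussianReal 0 1).real (Set.Iic (z / √σ2)) := by
    have hmap := gaussianReal_map_const_mul (μ := 0) (v := 1) (√σ2)
    have hv : (NNReal.mk (√σ2 ^ 2) (sq_nonneg _) * 1 : NNReal) = σ2.toNNReal := by
      rw [mul_one]
      apply NNReal.eq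
      change √σ2 ^ 2 = _
      simp [Real.sq_sqrt hσ2pos.le, hσ2pos.le]
    rw [mul_zero, hv] at hmap
    rw [← hmap, Measure.map_apply (measurable_const_mul _) measurableSet_Iic, Measure.real]
    congr 2
    ext x
    simp [le_div_iff₀ hs, mul_comm]
  change |(Measure.map f (gam (Fin d)) (Set.Iic z)).toReal - _| ≤ _
  rw [e1, e2]
  exact key
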